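/- Second cohomology of the Witt algebra in cocycle form: Let K : ℤ×ℤ → ℂ satisfy K(m,n) = −K(n,m) for all m, n ∈ ℤ and the cocycle identity (m−n)K(m+n,p) + (n−p)K(n+p,m) + (p−m)K(p+m,n) = 0 for all m, n, p ∈ ℤ. Then there exist c ∈ ℂ and a function g : ℤ → ℂ such that K(m,n) = (c/12)(m³ − m)·δ_{m+n,0} + (m−n)·g(m+n) for all m, n ∈ ℤ. -/

import Mathlib

/-- Second cohomology of the Witt algebra in cocycle form: every antisymmetric
2-cocycle `K` is cohomologous to the standard Virasoro cocycle, i.e.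
`K m n = (c/12)(m³ - m) δ_{m+n,0} + (m - n) g (m + n)` for some `c` and `g`. -/
theorem stmt_4 (K : ℤ → ℤ → ℂ)
    (hanti : ∀ m n : ℤ, K m n = - K n m)
    (hcoc : ∀ m n p : ℤ,
      ((m : ℂ) - n) * K (m + n) p + ((n : ℂ) - p) * K (n + p) m
        + ((p : ℂ) - m) * K (p + m) n = 0) :
    ∃ c : ℂ, ∃ g : ℤ → ℂ, ∀ m n : ℤ,
      K m n = c / 12 * ((m : ℂ) ^ 3 - m) * (if m + n = 0 then 1 else 0)
        + ((m : ℂ) - n) * g (m + n) := by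
  obtain ⟨f, hf⟩ : ∃ f : ℤ → ℂ, ∀ m, f m = K m (-m) := ⟨_, fun _ => rfl⟩
  have hodd : ∀ m, f (-m) = - f m := by
    intro m
    rw [hf, hf, neg_neg, hanti]
  have hrec : ∀ m : ℤ, ((m : ℂ) - 1) * f (m + 1) = (m + 2) * f m - (2 * m + 1) * f 1 := by
    intro m
    have h := hcoc m 1 (-m - 1)
    have e1 : K (m + 1) (-m - 1) = f (m + 1) := by rw [hf]; congr 1; ring
    have e2 : K (1 + (-m - 1)) m = - f m := by
      rw [← hodd, hf]; congr 1 <;> ring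
    have e3 : K (-m - 1 + m) 1 = - f 1 := by
      rw [← hodd, hf]; congr 1; ring
    rw [e1, e2, e3] at h
    push_cast at h
    linear_combination h
  have hnat : ∀ k : ℕ, f ((k : ℤ) + 2) =
      (f 2 - 2 * f 1) / 6 * (((k : ℂ) + 2) ^ 3 - (k + 2)) + (k + 2) * f 1 := by
    intro k
    induction k with
    | zero => simp; ring
    | succ k ih =>
      have h := hrec ((k : ℤ) + 2)
      rw [ih] at h
      have hk : (k : ℂ) + 1 ≠ 0 := by exact_mod_cast Nat.succ_ne_zero k
      apply mul_left_cancel₀ hk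
      have e : (((k + 1 : ℕ) : ℤ) + 2) = (k : ℤ) + 2 + 1 := by push_cast; ring
      rw [e]
      push_cast at h ⊢
      linear_combination h
  have h0 : f 0 = 0 := by
    have := hodd 0
    rw [neg_zero] at this
    exact self_eq_neg.mp this
  have hn' : ∀ k : ℕ, f (k : ℤ) =
      (f 2 - 2 * f 1) / 6 * ((k : ℂ) ^ 3 - k) + k * f 1 := by
    intro k
    match k with
    | 0 => simp [h0]
    | 1 => simp
    | k + 2 =>
      have := hnat k
      push_cast
      exact this
  have hall : ∀ m : ℤ, f m = (f 2 - 2 * f 1) / 6 * ((m : ℂ) ^ 3 - m) + m * f 1 := by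
    intro m
    obtain ⟨k, rfl | rfl⟩ := m.eq_nat_or_neg
    · simpa using hn' k
    · rw [hodd, hn']
      push_cast
      ring
  refine ⟨2 * (f 2 - 2 * f 1), fun s => if s = 0 then f 1 / 2 else K s 0 / s, ?_⟩
  intro m n
  by_cases hs : m + n = 0
  · obtain rfl : n = -m := by omega
    simp only [hs, if_true]
    rw [← hf, hall]
    push_cast
    ring
  · simp only [hs, if_false]
    have hs' : ((m : ℂ) + n) ≠ 0 := by exact_mod_cast hs
    have h := hcoc m n 0
    rw [add_zero, zero_add, hanti n m] at h
    push_cast at h ⊢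
    rw [mul_zero, zero_add, ← mul_div_assoc, eq_div_iff hs']
    linear_combination -h
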